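/- Under the stated network and flexibility model with shifting costs d_{ij} = 0: let p²_cost be the infimum of the generation cost c·P_g over the DC OPF feasible set F(d₀) (assumed nonempty and bounded below). Suppose λ_LMP : 𝒞 → ℝ satisfies the unchanged-binding-constraints property: for every flexibility-feasible pair (ΔP_d, s), the infimum of c·P_g over F(d(ΔP_d)) equals p²_cost + Σ_{i∈𝒞} λ_LMP,i ΔP_{d,i}. Let (ΔP_d*, s*) be a flexibility-feasible pair minimizing Σ_{i∈𝒞} λ_LMP,i ΔP_{d,i} over all flexibility-feasible pairs, and let p¹_cost be the infimum of c·P_g over F(d(ΔP_d*)). Let p³_cost be the infimum of c·P_g over the Model 3 feasible set (assumed bounded below). Then p³_cost ≤ p¹_cost ≤ p²_cost. -/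

import Mathlib

open scoped BigOperators

variable {𝒩 𝒢 𝒞 : Type}

/-- The DC OPF feasible set `F(d)` for a nodal load vector `d : 𝒩 → ℝ`: pairs
`(θ, P_g)` satisfying nodal power balance, line flow limits, generator limits,
and the reference-angle constraint. -/
def FeasOPF [Fintype 𝒢] [DecidableEq 𝒩]
    (nodeOfGen : 𝒢 → 𝒩) (lines : Finset (𝒩 × 𝒩)) (β Plim : 𝒩 × 𝒩 → ℝ)
    (Pmin Pmax : 𝒢 → ℝ) (ref : 𝒩) (d : 𝒩 → ℝ) :
    Set ((𝒩 → ℝ) × (𝒢 → ℝ)) :=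
  {p | (∀ i : 𝒩,
          (∑ ℓ : 𝒢, if nodeOfGen ℓ = i then p.2 ℓ else 0) - d i
            = ∑ e ∈ lines.filter (fun e => e.1 = i), -β e * (p.1 e.1 - p.1 e.2)) ∧
       (∀ e ∈ lines,
          -Plim e ≤ -β e * (p.1 e.1 - p.1 e.2) ∧ -β e * (p.1 e.1 - p.1 e.2) ≤ Plim e) ∧
       (∀ ℓ : 𝒢, Pmin ℓ ≤ p.2 ℓ ∧ p.2 ℓ ≤ Pmax ℓ) ∧
       p.1 ref = 0}

/-- A pair `(ΔPd, s)` is flexibility-feasible: lossless load shifting (1a),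
no self-shifts, shift caps `M`, and per-data-center shift limits `ε_i · P_{d,i}`. -/
def FlexFeasible [Fintype 𝒞] (Pd ε : 𝒞 → ℝ) (M : 𝒞 × 𝒞 → ℝ)
    (ΔPd : 𝒞 → ℝ) (s : 𝒞 × 𝒞 → ℝ) : Prop :=
  (∀ i : 𝒞, ΔPd i = (∑ j : 𝒞, s (j, i)) - ∑ k : 𝒞, s (i, k)) ∧
  (∀ i : 𝒞, s (i, i) = 0) ∧
  (∀ i j : 𝒞, 0 ≤ s (i, j) ∧ s (i, j) ≤ M (i, j)) ∧
  (∀ i : 𝒞, -(ε i * Pd i) ≤ ΔPd i ∧ ΔPd i ≤ ε i * Pd i)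

/-- The shifted nodal load `d(ΔPd)`: the baseline load at each node plus the sum of
the load changes of the data centers attached to that node. -/
def shiftedLoad [Fintype 𝒞] [DecidableEq 𝒩]
    (nodeOfDC : 𝒞 → 𝒩) (d₀ : 𝒩 → ℝ) (ΔPd : 𝒞 → ℝ) : 𝒩 → ℝ :=
  fun n => d₀ n + ∑ i : 𝒞, if nodeOfDC i = n then ΔPd i else 0

/-- The Model 3 feasible set: tuples `(θ, P_g, ΔPd, s)` such that `(ΔPd, s)` is
flexibility-feasible and `(θ, P_g) ∈ F(d(ΔPd))`. -/
def Model3Feas [Fintype 𝒢] [Fintype 𝒞] [DecidableEq 𝒩]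
    (nodeOfGen : 𝒢 → 𝒩) (lines : Finset (𝒩 × 𝒩)) (β Plim : 𝒩 × 𝒩 → ℝ)
    (Pmin Pmax : 𝒢 → ℝ) (ref : 𝒩) (nodeOfDC : 𝒞 → 𝒩) (d₀ : 𝒩 → ℝ)
    (Pd ε : 𝒞 → ℝ) (M : 𝒞 × 𝒞 → ℝ) :
    Set ((𝒩 → ℝ) × (𝒢 → ℝ) × (𝒞 → ℝ) × (𝒞 × 𝒞 → ℝ)) :=
  {x | FlexFeasible Pd ε M x.2.2.1 x.2.2.2 ∧
       (x.1, x.2.1) ∈ FeasOPF nodeOfGen lines β Plim Pmin Pmax ref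
          (shiftedLoad nodeOfDC d₀ x.2.2.1)}

/-!
Shifting nothing is flexibility-feasible, so an LMP-optimal shift `ΔPd*` has
`∑ i, LMP i * ΔPd* i ≤ 0`; as the optimal cost at `ΔPd*` is `p₂` plus this sum, `p₁ ≤ p₂`.
Freezing the shift at `ΔPd*` embeds `F(d(ΔPd*))` into the Model 3 feasible set without changing
the cost, so `p₃ ≤ p₁`.
-/

section FlexFeasible

variable [Fintype 𝒞] {Pd ε : 𝒞 → ℝ} {M : 𝒞 × 𝒞 → ℝ}

theorem flexFeasible_zero (hεPd : ∀ i, 0 ≤ ε i * Pd i) (hM : ∀ i j, 0 ≤ M (i, j)) :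
    FlexFeasible Pd ε M 0 0 :=
  ⟨fun _ => by simp, fun _ => rfl, fun i j => ⟨le_rfl, hM i j⟩,
    fun i => ⟨neg_nonpos.mpr (hεPd i), hεPd i⟩⟩

theorem sum_mul_nonpos_of_forall_flexFeasible_le (hεPd : ∀ i, 0 ≤ ε i * Pd i)
    (hM : ∀ i j, 0 ≤ M (i, j)) {w ΔPdStar : 𝒞 → ℝ}
    (hmin : ∀ ΔPd s, FlexFeasible Pd ε M ΔPd s → ∑ i, w i * ΔPdStar i ≤ ∑ i, w i * ΔPd i) :
    ∑ i, w i * ΔPdStar i ≤ 0 := by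
  simpa using hmin 0 0 (flexFeasible_zero hεPd hM)

end FlexFeasible

section Model3

variable [Fintype 𝒢] [Fintype 𝒞] [DecidableEq 𝒩]
  {nodeOfGen : 𝒢 → 𝒩} {lines : Finset (𝒩 × 𝒩)} {β Plim : 𝒩 × 𝒩 → ℝ}
  {Pmin Pmax : 𝒢 → ℝ} {ref : 𝒩} {nodeOfDC : 𝒞 → 𝒩} {d₀ : 𝒩 → ℝ}
  {Pd ε : 𝒞 → ℝ} {M : 𝒞 × 𝒞 → ℝ} {ΔPd : 𝒞 → ℝ} {s : 𝒞 × 𝒞 → ℝ}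

theorem image_feasOPF_shiftedLoad_subset_image_model3Feas {α : Type*}
    (f : (𝒩 → ℝ) × (𝒢 → ℝ) → α) (hflex : FlexFeasible Pd ε M ΔPd s) :
    f '' FeasOPF nodeOfGen lines β Plim Pmin Pmax ref (shiftedLoad nodeOfDC d₀ ΔPd) ⊆
      (fun x => f (x.1, x.2.1)) ''
        Model3Feas nodeOfGen lines β Plim Pmin Pmax ref nodeOfDC d₀ Pd ε M := by
  rintro _ ⟨⟨θ, Pg⟩, hOPF, rfl⟩
  exact ⟨(θ, Pg, ΔPd, s), ⟨hflex, hOPF⟩, rfl⟩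

theorem csInf_image_model3Feas_le_csInf_image_feasOPF {α : Type*}
    [ConditionallyCompleteLattice α] (f : (𝒩 → ℝ) × (𝒢 → ℝ) → α)
    (hbdd : BddBelow ((fun x => f (x.1, x.2.1)) ''
      Model3Feas nodeOfGen lines β Plim Pmin Pmax ref nodeOfDC d₀ Pd ε M))
    (hflex : FlexFeasible Pd ε M ΔPd s)
    (hne : (FeasOPF nodeOfGen lines β Plim Pmin Pmax ref
      (shiftedLoad nodeOfDC d₀ ΔPd)).Nonempty) :
    sInf ((fun x => f (x.1, x.2.1)) ''
        Model3Feas nodeOfGen lines β Plim Pmin Pmax ref nodeOfDC d₀ Pd ε M) ≤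
      sInf (f '' FeasOPF nodeOfGen lines β Plim Pmin Pmax ref (shiftedLoad nodeOfDC d₀ ΔPd)) :=
  csInf_le_csInf hbdd (hne.image f) (image_feasOPF_shiftedLoad_subset_image_model3Feas f hflex)

end Model3

/-- Lemma 1 of the paper, with shifting costs `d_{ij} = 0`.
Let `p²_cost` be the infimum of the generation cost `c · P_g` over the DC OPF feasible
set `F(d₀)` (nonempty and bounded below).  Suppose `λ_LMP : 𝒞 → ℝ` satisfies the
unchanged-binding-constraints property: for every flexibility-feasible pair `(ΔPd, s)`,
the set `F(d(ΔPd))` is nonempty and the infimum of `c · P_g` over it equals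
`p²_cost + ∑_{i∈𝒞} λ_LMP i · ΔPd i`.  Let `(ΔPd*, s*)` be a flexibility-feasible pair
minimizing `∑_{i∈𝒞} λ_LMP i · ΔPd i` over all flexibility-feasible pairs (this is
Model 1 with `f_cost` and `d_{ij} = 0`), and let `p¹_cost` be the infimum of `c · P_g`
over `F(d(ΔPd*))`.  Let `p³_cost` be the infimum of `c · P_g` over the Model 3 feasible
set (bounded below).  Then `p³_cost ≤ p¹_cost ≤ p²_cost`. -/
theorem model3_cost_le_model1_le_model2 [Fintype 𝒢] [Fintype 𝒞] [DecidableEq 𝒩]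
    (nodeOfGen : 𝒢 → 𝒩) (lines : Finset (𝒩 × 𝒩)) (β Plim : 𝒩 × 𝒩 → ℝ)
    (Pmin Pmax : 𝒢 → ℝ) (ref : 𝒩) (nodeOfDC : 𝒞 → 𝒩) (d₀ : 𝒩 → ℝ)
    (Pd ε : 𝒞 → ℝ) (M : 𝒞 × 𝒞 → ℝ) (c : 𝒢 → ℝ)
    (hPd : ∀ i : 𝒞, 0 ≤ Pd i) (hε : ∀ i : 𝒞, 0 ≤ ε i) (hM : ∀ i j : 𝒞, 0 ≤ M (i, j))
    -- `F(d₀)` is nonempty and the cost objective is bounded below on it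
    (hne₀ : (FeasOPF nodeOfGen lines β Plim Pmin Pmax ref d₀).Nonempty)
    (hbdd₀ : BddBelow ((fun p : (𝒩 → ℝ) × (𝒢 → ℝ) => ∑ ℓ : 𝒢, c ℓ * p.2 ℓ) ''
        FeasOPF nodeOfGen lines β Plim Pmin Pmax ref d₀))
    -- Model 2 optimal cost
    (p₂ : ℝ)
    (hp₂ : p₂ = sInf ((fun p : (𝒩 → ℝ) × (𝒢 → ℝ) => ∑ ℓ : 𝒢, c ℓ * p.2 ℓ) ''
        FeasOPF nodeOfGen lines β Plim Pmin Pmax ref d₀))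
    -- the LMPs and the unchanged-binding-constraints property
    (LMP : 𝒞 → ℝ)
    (hLMP : ∀ (ΔPd : 𝒞 → ℝ) (s : 𝒞 × 𝒞 → ℝ), FlexFeasible Pd ε M ΔPd s →
        (FeasOPF nodeOfGen lines β Plim Pmin Pmax ref
            (shiftedLoad nodeOfDC d₀ ΔPd)).Nonempty ∧
        sInf ((fun p : (𝒩 → ℝ) × (𝒢 → ℝ) => ∑ ℓ : 𝒢, c ℓ * p.2 ℓ) ''
            FeasOPF nodeOfGen lines β Plim Pmin Pmax ref (shiftedLoad nodeOfDC d₀ ΔPd))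
          = p₂ + ∑ i : 𝒞, LMP i * ΔPd i)
    -- the Model 1 optimal load shift `(ΔPd*, s*)`
    (ΔPdStar : 𝒞 → ℝ) (sStar : 𝒞 × 𝒞 → ℝ)
    (hflexStar : FlexFeasible Pd ε M ΔPdStar sStar)
    (hminStar : ∀ (ΔPd : 𝒞 → ℝ) (s : 𝒞 × 𝒞 → ℝ), FlexFeasible Pd ε M ΔPd s →
        ∑ i : 𝒞, LMP i * ΔPdStar i ≤ ∑ i : 𝒞, LMP i * ΔPd i)
    -- Model 1 optimal cost
    (p₁ : ℝ)
    (hp₁ : p₁ = sInf ((fun p : (𝒩 → ℝ) × (𝒢 → ℝ) => ∑ ℓ : 𝒢, c ℓ * p.2 ℓ) ''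
        FeasOPF nodeOfGen lines β Plim Pmin Pmax ref (shiftedLoad nodeOfDC d₀ ΔPdStar)))
    -- Model 3: cost bounded below, and its optimal cost
    (hbdd₃ : BddBelow ((fun x : (𝒩 → ℝ) × (𝒢 → ℝ) × (𝒞 → ℝ) × (𝒞 × 𝒞 → ℝ) =>
          ∑ ℓ : 𝒢, c ℓ * x.2.1 ℓ) ''
        Model3Feas nodeOfGen lines β Plim Pmin Pmax ref nodeOfDC d₀ Pd ε M))
    (p₃ : ℝ)
    (hp₃ : p₃ = sInf ((fun x : (𝒩 → ℝ) × (𝒢 → ℝ) × (𝒞 → ℝ) × (𝒞 × 𝒞 → ℝ) =>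
          ∑ ℓ : 𝒢, c ℓ * x.2.1 ℓ) ''
        Model3Feas nodeOfGen lines β Plim Pmin Pmax ref nodeOfDC d₀ Pd ε M)) :
    p₃ ≤ p₁ ∧ p₁ ≤ p₂ := by
  obtain ⟨hneStar, hvalStar⟩ := hLMP ΔPdStar sStar hflexStar
  have hsum_nonpos : ∑ i, LMP i * ΔPdStar i ≤ 0 :=
    sum_mul_nonpos_of_forall_flexFeasible_le (fun i => mul_nonneg (hε i) (hPd i)) hM hminStar
  constructor
  · rw [hp₃, hp₁]
    exact csInf_image_model3Feas_le_csInf_image_feasOPF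
      (fun p => ∑ ℓ, c ℓ * p.2 ℓ) hbdd₃ hflexStar hneStar
  · calc
      p₁ = p₂ + ∑ i, LMP i * ΔPdStar i := hp₁.trans hvalStar
      _ ≤ p₂ := add_le_of_nonpos_right hsum_nonpos
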